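/- Let L/k be an extension of G-graded fields, A ⊆ L an integrally closed graded k-subalgebra (a graded domain integrally closed in its own graded fraction field), T = {T_i} a set of homogeneous elements of L^× algebraically independent over A, and F = Frac_G(k[T]) ⊆ L the graded fraction field of the graded k-subalgebra generated by the T_i. Then the graded subring F·A ⊆ L generated by F and A is integrally closed. -/

import Mathlib

universe u v

/-- A `G`-graded commutative ring structure on `A`: graded pieces `deg g`,
multiplicativity of the grading, and an internal direct sum decomposition
recorded by the homogeneous-component function `comp`. -/
structure GradedStr (G : Type u) [CommGroup G] (A : Type v) [CommRing A] where
  deg : G → AddSubgroup A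
  one_mem : (1 : A) ∈ deg 1
  mul_mem : ∀ {g h : G} {a b : A}, a ∈ deg g → b ∈ deg h → a * b ∈ deg (g * h)
  comp : A → G → A
  comp_mem : ∀ a g, comp a g ∈ deg g
  comp_add : ∀ a b g, comp (a + b) g = comp a g + comp b g
  comp_of_mem : ∀ {a : A} {g : G}, a ∈ deg g → comp a g = a
  comp_of_mem_ne : ∀ {a : A} {g g' : G}, a ∈ deg g → g' ≠ g → comp a g' = 0
  finite_support : ∀ a : A, (Function.support (comp a)).Finite
  sum_comp : ∀ a : A, ∑ᶠ g, comp a g = a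

namespace GradedStr

variable {G : Type u} [CommGroup G] {A : Type v} [CommRing A]

/-- `a` is homogeneous: it lies in some graded piece. -/
def IsHomog (𝒜 : GradedStr G A) (a : A) : Prop := ∃ g, a ∈ 𝒜.deg g

/-- A `G`-graded field: a nonzero graded ring in which every nonzero homogeneous
element is invertible. -/
def IsGradedField (𝒜 : GradedStr G A) : Prop :=
  Nontrivial A ∧ ∀ a : A, 𝒜.IsHomog a → a ≠ 0 → IsUnit a

/-- A graded subring: a subring stable under taking homogeneous components. -/
def IsGradedSubring (𝒜 : GradedStr G A) (S : Subring A) : Prop :=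
  ∀ x ∈ S, ∀ g, 𝒜.comp x g ∈ S

/-- A graded subfield of a graded field: a graded subring containing the inverses of
its nonzero homogeneous elements. -/
def IsGradedSubfield (𝒜 : GradedStr G A) (S : Subring A) : Prop :=
  𝒜.IsGradedSubring S ∧ ∀ x ∈ S, 𝒜.IsHomog x → x ≠ 0 → Ring.inverse x ∈ S

/-- The additive subgroup of homogeneous polynomials of grading `h` in `K[g₀⁻¹ T]`,
the polynomial ring in which `T` is declared homogeneous of grading `g₀`: the
coefficient of `T^n` must be homogeneous of grading `h * g₀⁻ⁿ`. -/
def polyDeg (𝒜 : GradedStr G A) (g₀ h : G) : AddSubgroup (Polynomial A) where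
  carrier := {p | ∀ n : ℕ, p.coeff n ∈ 𝒜.deg (h * (g₀ ^ n)⁻¹)}
  zero_mem' := by intro n; simpa using (𝒜.deg (h * (g₀ ^ n)⁻¹)).zero_mem
  add_mem' := by
    intro p q hp hq n
    rw [Polynomial.coeff_add]
    exact (𝒜.deg _).add_mem (hp n) (hq n)
  neg_mem' := by
    intro p hp n
    rw [Polynomial.coeff_neg]
    exact (𝒜.deg _).neg_mem (hp n)

/-- A homogeneous polynomial in `K[g₀⁻¹T]`. -/
def IsHomogPoly (𝒜 : GradedStr G A) (g₀ : G) (p : Polynomial A) : Prop :=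
  ∃ h, p ∈ 𝒜.polyDeg g₀ h

/-- The graded fraction field of a graded subring of a graded field, computed inside
the ambient graded field: the subring generated by `S` together with the inverses of
the nonzero homogeneous elements of `S`. -/
def fracIn (𝒜 : GradedStr G A) (S : Subring A) : Subring A :=
  Subring.closure (↑S ∪ {y : A | ∃ x ∈ S, x ≠ 0 ∧ 𝒜.IsHomog x ∧ y = Ring.inverse x})

end GradedStr

/-- `x` is integral over the subring `S` (satisfies a monic polynomial equation with
coefficients in `S`). -/
def IntegralOver {A : Type v} [CommRing A] (S : Subring A) (x : A) : Prop :=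
  ∃ p : Polynomial A, p.Monic ∧ (∀ n, p.coeff n ∈ S) ∧ Polynomial.eval x p = 0

/-- Algebraic independence of a family of elements over a subring: the evaluation map
from the (multivariate) polynomial ring is injective.  (For homogeneous elements this
is graded algebraic independence, the grading playing no role in injectivity.) -/
def AlgIndepOver {A : Type v} [CommRing A] {ι : Type*} (S : Subring A) (T : ι → A) : Prop :=
  Function.Injective (MvPolynomial.eval₂Hom S.subtype T)

/-- A graded valuation ring of the graded subfield `F` of the ambient graded field:
a graded subring `O ⊆ F` such that every nonzero homogeneous element `f` of `F`
satisfies `f ∈ O` or `f⁻¹ ∈ O`. -/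
def IsGVRofSubfield {G : Type u} [CommGroup G] {A : Type v} [CommRing A]
    (𝒜 : GradedStr G A) (F : Subring A) (O : Subring A) : Prop :=
  O ≤ F ∧ 𝒜.IsGradedSubring O ∧
    ∀ f ∈ F, f ≠ 0 → 𝒜.IsHomog f → f ∈ O ∨ Ring.inverse f ∈ O

section Statement12

variable {G : Type u} [CommGroup G] {L : Type v} [CommRing L]

/-- A graded subring `C` of the ambient graded field `L` is integrally closed (in its
graded fraction field, computed inside `L`): every homogeneous element `x` of `L`
that is a ratio of homogeneous elements of `C` and is integral over `C` already lies
in `C`. -/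
def GIntegrallyClosedIn (𝒜 : GradedStr G L) (C : Subring L) : Prop :=
  ∀ x : L, 𝒜.IsHomog x →
    (∃ a ∈ C, ∃ b ∈ C, 𝒜.IsHomog a ∧ 𝒜.IsHomog b ∧ b ≠ 0 ∧ x * b = a) →
    IntegralOver C x → x ∈ C

open Polynomial in
/-- The subring of polynomials with coefficients in `B`. -/
noncomputable def PB (B : Subring L) : Subring L[X] := (mapRingHom B.subtype).range

open Polynomial in
theorem mem_PB {B : Subring L} {p : L[X]} : p ∈ PB B ↔ ∀ n, p.coeff n ∈ B := by
  rw [PB, Polynomial.mem_map_range]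
  simp

/-- additive component map -/
def GradedStr.compHom (𝒜 : GradedStr G L) (g : G) : L →+ L :=
  AddMonoidHom.mk' (fun a => 𝒜.comp a g) (fun a b => 𝒜.comp_add a b g)

theorem GradedStr.comp_zero (𝒜 : GradedStr G L) (g : G) : 𝒜.comp 0 g = 0 :=
  (𝒜.compHom g).map_zero

theorem GradedStr.comp_sum (𝒜 : GradedStr G L) (g : G) {ι : Type*} (s : Finset ι) (f : ι → L) :
    𝒜.comp (∑ i ∈ s, f i) g = ∑ i ∈ s, 𝒜.comp (f i) g :=
  map_sum (𝒜.compHom g) f s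

theorem GradedStr.comp_mul_left (𝒜 : GradedStr G L) {a : L} {g : G} (ha : a ∈ 𝒜.deg g)
    (y : L) (h : G) : 𝒜.comp (a * y) h = a * 𝒜.comp y (g⁻¹ * h) := by
  classical
  have hy : y = ∑ i ∈ (𝒜.finite_support y).toFinset, 𝒜.comp y i := by
    conv_lhs => rw [← 𝒜.sum_comp y]
    exact finsum_eq_sum _ (𝒜.finite_support y)
  conv_lhs => rw [hy]
  rw [Finset.mul_sum, 𝒜.comp_sum]
  rw [Finset.sum_eq_single (g⁻¹ * h)]
  · apply 𝒜.comp_of_mem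
    have := 𝒜.mul_mem ha (𝒜.comp_mem y (g⁻¹ * h))
    simpa using this
  · intro i _ hi
    apply 𝒜.comp_of_mem_ne (𝒜.mul_mem ha (𝒜.comp_mem y i))
    rintro rfl
    simp at hi
  · intro hn
    have : 𝒜.comp y (g⁻¹ * h) = 0 := by simpa using hn
    rw [this, mul_zero, 𝒜.comp_zero]

theorem GradedStr.inverse_mem (𝒜 : GradedStr G L) {a : L} {g : G} (ha : a ∈ 𝒜.deg g)
    (hu : IsUnit a) : Ring.inverse a ∈ 𝒜.deg g⁻¹ := by
  have h1 := 𝒜.comp_mul_left ha (Ring.inverse a) 1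
  rw [Ring.mul_inverse_cancel a hu, 𝒜.comp_of_mem 𝒜.one_mem, mul_one] at h1
  have : Ring.inverse a = 𝒜.comp (Ring.inverse a) g⁻¹ := by
    apply hu.mul_left_cancel
    rw [Ring.mul_inverse_cancel a hu, ← h1]
  rw [this]
  exact 𝒜.comp_mem _ _

theorem GradedStr.pow_mem (𝒜 : GradedStr G L) {a : L} {g : G} (ha : a ∈ 𝒜.deg g) (n : ℕ) :
    a ^ n ∈ 𝒜.deg (g ^ n) := by
  induction n with
  | zero => simpa using 𝒜.one_mem
  | succ n ih => rw [pow_succ, pow_succ]; exact 𝒜.mul_mem ih ha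

/-- Elements which land in `B` after multiplication by an element of `S`. -/
def locS (S : Submonoid L) (B : Subring L) (h : ∀ x ∈ S, x ∈ B) : Subring L where
  carrier := {y | ∃ s ∈ S, s * y ∈ B}
  one_mem' := ⟨1, S.one_mem, by simpa using B.one_mem⟩
  zero_mem' := ⟨1, S.one_mem, by simpa using B.zero_mem⟩
  mul_mem' := by
    rintro a b ⟨s, hs, hsa⟩ ⟨s', hs', hsb⟩
    refine ⟨s * s', S.mul_mem hs hs', ?_⟩
    have := B.mul_mem hsa hsb
    rwa [mul_mul_mul_comm] at this
  add_mem' := by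
    rintro a b ⟨s, hs, hsa⟩ ⟨s', hs', hsb⟩
    refine ⟨s * s', S.mul_mem hs hs', ?_⟩
    have := B.add_mem (B.mul_mem (h _ hs') hsa) (B.mul_mem (h _ hs) hsb)
    convert this using 1
    ring
  neg_mem' := by
    rintro a ⟨s, hs, hsa⟩
    exact ⟨s, hs, by simpa using hsa⟩

theorem mem_locS {S : Submonoid L} {B : Subring L} {h : ∀ x ∈ S, x ∈ B} {y : L} :
    y ∈ locS S B h ↔ ∃ s ∈ S, s * y ∈ B := Iff.rfl

theorem le_locS (S : Submonoid L) (B : Subring L) (h : ∀ x ∈ S, x ∈ B) : B ≤ locS S B h :=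
  fun x hx => ⟨1, S.one_mem, by simpa using hx⟩

theorem locS_common (S : Submonoid L) (B : Subring L) (h : ∀ x ∈ S, x ∈ B)
    {ι : Type*} (F : Finset ι) (f : ι → L) (hf : ∀ i ∈ F, f i ∈ locS S B h) :
    ∃ s ∈ S, ∀ i ∈ F, s * f i ∈ B := by
  classical
  induction F using Finset.induction_on with
  | empty => exact ⟨1, S.one_mem, by simp⟩
  | insert i F hi ih =>
    obtain ⟨s, hs, hs2⟩ := ih (fun j hj => hf j (Finset.mem_insert_of_mem hj))
    obtain ⟨s', hs', hs2'⟩ := hf i (Finset.mem_insert_self _ _)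
    refine ⟨s * s', S.mul_mem hs hs', fun j hj => ?_⟩
    rcases Finset.mem_insert.1 hj with rfl | hj
    · rw [mul_assoc]; exact B.mul_mem (h _ hs) hs2'
    · have := B.mul_mem (h _ hs') (hs2 j hj)
      rwa [← mul_assoc, mul_comm s' s] at this

open Polynomial in
theorem locS_common_poly (S : Submonoid L) (B : Subring L) (h : ∀ x ∈ S, x ∈ B)
    (p : L[X]) (hp : p ∈ PB (locS S B h)) :
    ∃ s ∈ S, C s * p ∈ PB B := by
  obtain ⟨s, hs, h2⟩ := locS_common S B h p.support p.coeff (fun i _ => mem_PB.1 hp i)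
  refine ⟨s, hs, mem_PB.2 fun n => ?_⟩
  rw [coeff_C_mul]
  by_cases hn : n ∈ p.support
  · exact h2 n hn
  · rw [notMem_support_iff.1 hn, mul_zero]; exact B.zero_mem

/-- Nonzero homogeneous elements of `B`. -/
def GradedStr.homS (𝒜 : GradedStr G L) (hL : 𝒜.IsGradedField) (B : Subring L) : Submonoid L where
  carrier := {x | x ∈ B ∧ 𝒜.IsHomog x ∧ x ≠ 0}
  one_mem' := ⟨B.one_mem, ⟨1, 𝒜.one_mem⟩, by haveI := hL.1; exact one_ne_zero⟩
  mul_mem' := by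
    rintro a b ⟨ha, ⟨g, hg⟩, ha0⟩ ⟨hb, ⟨g', hg'⟩, hb0⟩
    refine ⟨B.mul_mem ha hb, ⟨_, 𝒜.mul_mem hg hg'⟩, fun h0 => hb0 ?_⟩
    exact (hL.2 a ⟨g, hg⟩ ha0).mul_left_cancel (by rw [h0, mul_zero])

theorem GradedStr.homS_mem {𝒜 : GradedStr G L} {hL : 𝒜.IsGradedField} {B : Subring L} {x : L} :
    x ∈ 𝒜.homS hL B ↔ x ∈ B ∧ 𝒜.IsHomog x ∧ x ≠ 0 := Iff.rfl

/-- the graded fraction field -/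
def GradedStr.gfrac (𝒜 : GradedStr G L) (hL : 𝒜.IsGradedField) (B : Subring L) : Subring L :=
  locS (𝒜.homS hL B) B (fun _ hx => hx.1)

theorem GradedStr.gfrac_subfield (𝒜 : GradedStr G L) (hL : 𝒜.IsGradedField) (B : Subring L)
    (hB : 𝒜.IsGradedSubring B) : 𝒜.IsGradedSubfield (𝒜.gfrac hL B) := by
  constructor
  · rintro x ⟨s, hs, hsx⟩ g
    refine ⟨s, hs, ?_⟩
    obtain ⟨hsB, ⟨g', hg'⟩, hs0⟩ := hs
    have := hB _ hsx (g' * g)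
    rw [𝒜.comp_mul_left hg'] at this
    simpa using this
  · rintro x ⟨s, hs, hsx⟩ ⟨g, hg⟩ hx0
    obtain ⟨hsB, ⟨g', hg'⟩, hs0⟩ := hs
    refine ⟨s * x, ⟨hsx, ⟨_, 𝒜.mul_mem hg' hg⟩, fun h0 => hx0 ?_⟩, ?_⟩
    · exact (hL.2 s ⟨g', hg'⟩ hs0).mul_left_cancel (by rw [h0, mul_zero])
    · rwa [mul_assoc, Ring.mul_inverse_cancel x (hL.2 x ⟨g, hg⟩ hx0), mul_one]

open Polynomial in
theorem mem_adj {B : Subring L} {t y : L} :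
    y ∈ Subring.closure (↑B ∪ {t}) ↔ ∃ p ∈ PB B, p.eval t = y := by
  constructor
  · intro hy
    have : Subring.closure (↑B ∪ {t}) ≤ (PB B).map (evalRingHom t) := by
      rw [Subring.closure_le]
      rintro z (hz | hz)
      · refine ⟨C z, mem_PB.2 fun n => ?_, by simp⟩
        rw [coeff_C]; split_ifs
        · exact hz
        · exact B.zero_mem
      · refine ⟨X, mem_PB.2 fun n => ?_, by simpa using hz.symm⟩
        rw [coeff_X]; split_ifs
        · exact B.one_mem
        · exact B.zero_mem
    obtain ⟨p, hp, h⟩ := this hy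
    exact ⟨p, hp, h⟩
  · rintro ⟨p, hp, rfl⟩
    rw [eval_eq_sum_range]
    refine Subring.sum_mem _ fun i _ => Subring.mul_mem _ ?_ (Subring.pow_mem _ ?_ _)
    · exact Subring.subset_closure (Or.inl (mem_PB.1 hp i))
    · exact Subring.subset_closure (Or.inr rfl)

open Polynomial in
theorem GradedStr.exists_comp_poly (𝒜 : GradedStr G L) {B : Subring L}
    (hB : 𝒜.IsGradedSubring B) {t : L} {g₀ : G} (ht : t ∈ 𝒜.deg g₀) (p : L[X]) (hp : p ∈ PB B)
    (h : G) : ∃ q ∈ PB B, q ∈ 𝒜.polyDeg g₀ h ∧ q.eval t = 𝒜.comp (p.eval t) h := by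
  have hc : ∀ n, (∑ i ∈ p.support, monomial i (𝒜.comp (p.coeff i) (h * (g₀ ^ i)⁻¹))).coeff n
      = 𝒜.comp (p.coeff n) (h * (g₀ ^ n)⁻¹) := by
    intro n
    rw [finset_sum_coeff]
    simp only [coeff_monomial]
    rw [Finset.sum_ite_eq']
    split_ifs with hn
    · rfl
    · rw [notMem_support_iff.1 hn, 𝒜.comp_zero]
  refine ⟨∑ i ∈ p.support, monomial i (𝒜.comp (p.coeff i) (h * (g₀ ^ i)⁻¹)),
    mem_PB.2 fun n => ?_, fun n => ?_, ?_⟩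
  · rw [hc]; exact hB _ (mem_PB.1 hp n) _
  · rw [hc]; exact 𝒜.comp_mem _ _
  · rw [eval_finset_sum, eval_eq_sum, Polynomial.sum, 𝒜.comp_sum]
    refine Finset.sum_congr rfl fun i _ => ?_
    rw [eval_monomial, mul_comm (p.coeff i), 𝒜.comp_mul_left (𝒜.pow_mem ht i), mul_comm, mul_comm h]

theorem GradedStr.adj_graded (𝒜 : GradedStr G L) {B : Subring L}
    (hB : 𝒜.IsGradedSubring B) {t : L} {g₀ : G} (ht : t ∈ 𝒜.deg g₀) :
    𝒜.IsGradedSubring (Subring.closure (↑B ∪ {t})) := by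
  intro y hy h
  obtain ⟨p, hp, rfl⟩ := mem_adj.1 hy
  obtain ⟨q, hq, -, h2⟩ := 𝒜.exists_comp_poly hB ht p hp h
  exact mem_adj.2 ⟨q, hq, h2⟩

theorem GradedStr.exists_homog_rep (𝒜 : GradedStr G L) {B : Subring L}
    (hB : 𝒜.IsGradedSubring B) {t : L} {g₀ : G} (ht : t ∈ 𝒜.deg g₀) {y : L} {h : G}
    (hy : y ∈ Subring.closure (↑B ∪ {t})) (hyh : y ∈ 𝒜.deg h) :
    ∃ q ∈ PB B, q ∈ 𝒜.polyDeg g₀ h ∧ q.eval t = y := by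
  obtain ⟨p, hp, rfl⟩ := mem_adj.1 hy
  obtain ⟨q, hq, h1, h2⟩ := 𝒜.exists_comp_poly hB ht p hp h
  exact ⟨q, hq, h1, by rw [h2, 𝒜.comp_of_mem hyh]⟩

open Polynomial in
theorem GradedStr.eval_mem_deg (𝒜 : GradedStr G L) {t : L} {g₀ h : G} (ht : t ∈ 𝒜.deg g₀)
    {p : L[X]} (hp : p ∈ 𝒜.polyDeg g₀ h) : p.eval t ∈ 𝒜.deg h := by
  rw [eval_eq_sum_range]
  refine AddSubgroup.sum_mem _ fun i _ => ?_
  have := 𝒜.mul_mem (hp i) (𝒜.pow_mem ht i)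
  simpa using this

open Polynomial in
theorem GradedStr.division (𝒜 : GradedStr G L) (hL : 𝒜.IsGradedField) {K : Subring L}
    (hK : 𝒜.IsGradedSubfield K) {g₀ hc hf : G} {c : L[X]} (hc0 : c ≠ 0) (hcK : c ∈ PB K)
    (hch : c ∈ 𝒜.polyDeg g₀ hc) : ∀ (n : ℕ) (f : L[X]), f.natDegree < n → f ∈ PB K →
    f ∈ 𝒜.polyDeg g₀ hf → ∃ q ∈ PB K, ∃ r ∈ PB K, r ∈ 𝒜.polyDeg g₀ hf ∧ f = q * c + r ∧
      r.degree < c.degree := by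
  haveI := hL.1
  intro n
  induction n with
  | zero => intro f hf; omega
  | succ n ih =>
    intro f hn hfK hfh
    by_cases hd : f.degree < c.degree
    · exact ⟨0, (PB K).zero_mem, f, hfK, hfh, by simp, hd⟩
    push Not at hd
    have hf0 : f ≠ 0 := by
      rintro rfl
      rw [degree_zero, le_bot_iff, degree_eq_bot] at hd
      exact hc0 hd
    have hnd : c.natDegree ≤ f.natDegree := natDegree_le_natDegree hd
    have hlc : c.leadingCoeff ≠ 0 := leadingCoeff_ne_zero.2 hc0
    have hlu : IsUnit c.leadingCoeff := hL.2 _ ⟨_, hch _⟩ hlc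
    set a := f.leadingCoeff * Ring.inverse c.leadingCoeff with ha
    have haK : a ∈ K := K.mul_mem (mem_PB.1 hfK _)
      (hK.2 _ (mem_PB.1 hcK _) ⟨_, hch _⟩ hlc)
    have hadeg : a ∈ 𝒜.deg _ := 𝒜.mul_mem (hfh f.natDegree) (𝒜.inverse_mem (hch c.natDegree) hlu)
    have halc : a * c.leadingCoeff = f.leadingCoeff := by
      rw [ha, mul_assoc, Ring.inverse_mul_cancel _ hlu, mul_one]
    set k := f.natDegree - c.natDegree with hk
    have hmK : monomial k a ∈ PB K := mem_PB.2 fun n => by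
      rw [coeff_monomial]; split_ifs
      · exact haK
      · exact K.zero_mem
    have hmh : monomial k a * c ∈ 𝒜.polyDeg g₀ hf := by
      intro n
      rw [← C_mul_X_pow_eq_monomial, mul_assoc, coeff_C_mul, coeff_X_pow_mul']
      split_ifs with hkn
      · have := 𝒜.mul_mem hadeg (hch (n - k))
        convert this using 2
        obtain ⟨j, rfl⟩ := Nat.exists_eq_add_of_le hkn
        have e1 : f.natDegree = k + c.natDegree := by omega
        rw [e1, Nat.add_sub_cancel_left, pow_add, pow_add]
        apply_fun Additive.ofMul
        simp only [ofMul_mul, ofMul_inv]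
        abel
      · rw [mul_zero]; exact (𝒜.deg _).zero_mem
    have ha0 : a ≠ 0 := by
      intro h0
      rw [h0, zero_mul] at halc
      exact hf0 (leadingCoeff_eq_zero.1 halc.symm)
    have hne : leadingCoeff (monomial k a) * leadingCoeff c ≠ 0 := by
      rw [leadingCoeff_monomial, halc]; exact leadingCoeff_ne_zero.2 hf0
    have ham : degree f = degree (monomial k a * c) := by
      rw [degree_mul' hne, degree_monomial k ha0, degree_eq_natDegree hc0, degree_eq_natDegree hf0]
      norm_cast
      omega
    have hlead : leadingCoeff f = leadingCoeff (monomial k a * c) := by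
      rw [leadingCoeff_mul' hne, leadingCoeff_monomial, halc]
    have hlt := degree_sub_lt ham hf0 hlead
    have hf'K : f - monomial k a * c ∈ PB K := (PB K).sub_mem hfK ((PB K).mul_mem hmK hcK)
    have hf'h : f - monomial k a * c ∈ 𝒜.polyDeg g₀ hf := (𝒜.polyDeg g₀ hf).sub_mem hfh hmh
    by_cases hz : f - monomial k a * c = 0
    · refine ⟨monomial k a, hmK, 0, (PB K).zero_mem, (𝒜.polyDeg g₀ hf).zero_mem, ?_, ?_⟩
      · rw [add_zero]; exact sub_eq_zero.1 hz
      · rw [degree_zero, bot_lt_iff_ne_bot]; exact fun h => hc0 (degree_eq_bot.1 h)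
    · have hlt' := natDegree_lt_natDegree hz hlt
      obtain ⟨q, hq, r, hr, hrh, he, hrd⟩ := ih _ (by omega) hf'K hf'h
      refine ⟨q + monomial k a, (PB K).add_mem hq hmK, r, hr, hrh, ?_, hrd⟩
      rw [sub_eq_iff_eq_add] at he
      rw [he]; ring

open Polynomial in
theorem GradedStr.step1_aux (𝒜 : GradedStr G L) (hL : 𝒜.IsGradedField) {K : Subring L}
    (hK : 𝒜.IsGradedSubfield K) {t : L} {g₀ : G} (ht : t ∈ 𝒜.deg g₀) {x : L} {g : G}
    (hx : x ∈ 𝒜.deg g) : ∀ (n : ℕ) (c : L[X]) (hc : G), c.natDegree < n → c ∈ PB K →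
    c ∈ 𝒜.polyDeg g₀ hc → c.eval t ≠ 0 →
    (∀ m, c.eval t * x ^ m ∈ Subring.closure (↑K ∪ {t})) → x ∈ Subring.closure (↑K ∪ {t}) := by
  intro n
  induction n with
  | zero => intro c hc h; omega
  | succ n ih =>
    intro c hc hn hcK hch hct hm
    have hct' := 𝒜.eval_mem_deg ht hch
    have hcu : IsUnit (c.eval t) := hL.2 _ ⟨_, hct'⟩ hct
    have h1 : c.eval t * x ∈ Subring.closure (↑K ∪ {t}) := by simpa using hm 1
    obtain ⟨f, hfK, hfh, hfe⟩ := 𝒜.exists_homog_rep hK.1 ht h1 (𝒜.mul_mem hct' hx)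
    have hc0 : c ≠ 0 := by rintro rfl; simp at hct
    obtain ⟨q, hq, r, hr, hrh, he, hrd⟩ := 𝒜.division hL hK hc0 hcK hch _ f
      (Nat.lt_succ_self _) hfK hfh
    have hev : c.eval t * x = q.eval t * c.eval t + r.eval t := by
      rw [← hfe, he, eval_add, eval_mul]
    have hqm : q.eval t ∈ Subring.closure (↑K ∪ {t}) := mem_adj.2 ⟨q, hq, rfl⟩
    by_cases hr0 : r.eval t = 0
    · have : x = q.eval t := by
        apply hcu.mul_left_cancel
        rw [hev, hr0, add_zero, mul_comm]
      rwa [this]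
    · have hrne : r ≠ 0 := by rintro rfl; simp at hr0
      have hlt := natDegree_lt_natDegree hrne hrd
      refine ih r _ (by omega) hr hrh hr0 fun m => ?_
      have : r.eval t * x ^ m = c.eval t * x ^ (m + 1) - q.eval t * (c.eval t * x ^ m) := by
        rw [eq_sub_of_add_eq' hev.symm]; ring
      rw [this]
      exact Subring.sub_mem _ (hm _) (Subring.mul_mem _ hqm (hm _))

open Polynomial in
theorem pow_bounded (R : Subring L) {x a b : L} (ha : a ∈ R) (hb : b ∈ R) (hxb : x * b = a)
    (hx : IntegralOver R x) : ∃ n, ∀ m, b ^ n * x ^ m ∈ R := by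
  obtain ⟨p, hp, hpR, hpx⟩ := hx
  refine ⟨p.natDegree, fun m => ?_⟩
  induction m using Nat.strong_induction_on with
  | _ m ih =>
    by_cases hm : m ≤ p.natDegree
    · obtain ⟨j, hj⟩ := Nat.exists_eq_add_of_le hm
      have : b ^ p.natDegree * x ^ m = b ^ j * a ^ m := by
        rw [hj, ← hxb]; ring
      rw [this]
      exact R.mul_mem (R.pow_mem hb _) (R.pow_mem ha _)
    · obtain ⟨j, rfl⟩ := Nat.exists_eq_add_of_le (Nat.le_of_not_le hm)
      rw [eval_eq_sum_range, Finset.sum_range_succ, hp.coeff_natDegree, one_mul] at hpx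
      have h2 : x ^ p.natDegree = - ∑ i ∈ Finset.range p.natDegree, p.coeff i * x ^ i :=
        eq_neg_of_add_eq_zero_right hpx
      have : b ^ p.natDegree * x ^ (p.natDegree + j) = - ∑ i ∈ Finset.range p.natDegree,
          p.coeff i * (b ^ p.natDegree * x ^ (i + j)) := by
        rw [pow_add, h2, neg_mul, mul_neg, Finset.sum_mul, Finset.mul_sum]
        congr 1
        refine Finset.sum_congr rfl fun i _ => ?_
        ring
      rw [this]
      refine R.neg_mem (R.sum_mem fun i hi => R.mul_mem (hpR i) (ih _ ?_))
      have := Finset.mem_range.1 hi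
      omega

theorem GradedStr.step1 (𝒜 : GradedStr G L) (hL : 𝒜.IsGradedField) {K : Subring L}
    (hK : 𝒜.IsGradedSubfield K) {t : L} {g₀ : G} (ht : t ∈ 𝒜.deg g₀) :
    GIntegrallyClosedIn 𝒜 (Subring.closure (↑K ∪ {t})) := by
  rintro x ⟨g, hg⟩ ⟨a, ha, b, hb, -, ⟨h, hbh⟩, hb0, hxb⟩ hx
  obtain ⟨n, hn⟩ := pow_bounded _ ha hb hxb hx
  have hbn := 𝒜.pow_mem hbh n
  obtain ⟨c, hcK, hch, hce⟩ := 𝒜.exists_homog_rep hK.1 ht (Subring.pow_mem _ hb n) hbn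
  haveI := hL.1
  refine 𝒜.step1_aux hL hK ht hg _ c _ (Nat.lt_succ_self _) hcK hch ?_ ?_
  · rw [hce]; exact ((hL.2 b ⟨h, hbh⟩ hb0).pow n).ne_zero
  · rw [hce]; exact hn

open Polynomial in
theorem integralOver_iff {R : Subring L} {x : L} : IntegralOver R x ↔ IsIntegral R x := by
  constructor
  · rintro ⟨p, hp, hpR, hpx⟩
    have hl : p ∈ lifts R.subtype := by
      rw [lifts_iff_coeff_lifts]
      intro n
      exact ⟨⟨_, hpR n⟩, rfl⟩
    obtain ⟨q, hq, -, hqm⟩ := lifts_and_natDegree_eq_and_monic hl hp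
    refine ⟨q, hqm, ?_⟩
    rw [← hq, eval_map] at hpx
    exact hpx
  · rintro ⟨q, hq, h⟩
    refine ⟨q.map R.subtype, hq.map _, fun n => ?_, ?_⟩
    · rw [coeff_map]; exact (q.coeff n).2
    · rw [eval_map]; exact h

open Polynomial in
theorem GradedStr.step2 (𝒜 : GradedStr G L) (hL : 𝒜.IsGradedField) {B : Subring L}
    (hB : 𝒜.IsGradedSubring B) (hBic : GIntegrallyClosedIn 𝒜 B)
    {t : L} {g₀ : G} (ht : t ∈ 𝒜.deg g₀)
    (htr : ∀ p ∈ PB B, p.eval t = 0 → p = 0) :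
    GIntegrallyClosedIn 𝒜 (Subring.closure (↑B ∪ {t})) := by
  haveI := hL.1
  have hK := 𝒜.gfrac_subfield hL B hB
  set K := 𝒜.gfrac hL B with hKdef
  have hBK : B ≤ K := le_locS _ _ _
  have hPBK : PB B ≤ PB K := fun p hp => mem_PB.2 fun n => hBK (mem_PB.1 hp n)
  have hBtKt : Subring.closure (↑B ∪ {t}) ≤ Subring.closure (↑K ∪ {t}) :=
    Subring.closure_mono (Set.union_subset_union_left _ hBK)
  have htrK : ∀ p ∈ PB K, p.eval t = 0 → p = 0 := by
    intro p hp h0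
    obtain ⟨s, hs, hsp⟩ := locS_common_poly _ _ _ p hp
    have h1 := htr _ hsp (by rw [eval_mul, h0, mul_zero])
    have hu : IsUnit (C s) := (hL.2 s hs.2.1 hs.2.2).map C
    exact hu.mul_left_cancel (by rw [h1, mul_zero])
  rintro x ⟨g, hg⟩ ⟨a, ha, b, hb, hah, hbh, hb0, hxb⟩ hx
  have hxK : x ∈ Subring.closure (↑K ∪ {t}) := by
    refine 𝒜.step1 hL hK ht x ⟨g, hg⟩ ⟨a, hBtKt ha, b, hBtKt hb, hah, hbh, hb0, hxb⟩ ?_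
    obtain ⟨p, hp, hpR, hpx⟩ := hx
    exact ⟨p, hp, fun n => hBtKt (hpR n), hpx⟩
  obtain ⟨p, hpK, hph, rfl⟩ := 𝒜.exists_homog_rep hK.1 ht hxK hg
  obtain ⟨Q, hQ, hQB, hQx⟩ := hx
  choose c hcB hce using fun n => mem_adj.1 (hQB n)
  -- the monic polynomial over `L[X]`
  set M : L[X][X] := X ^ Q.natDegree + ∑ i ∈ Finset.range Q.natDegree, C (c i) * X ^ i with hM
  have hMm : M.Monic := by
    apply monic_X_pow_add
    rw [degree_lt_iff_coeff_zero]
    intro m hm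
    rw [finset_sum_coeff]
    refine Finset.sum_eq_zero fun i hi => ?_
    rw [coeff_C_mul_X_pow, if_neg]
    have := Finset.mem_range.1 hi
    omega
  have hMe : M.eval p = 0 := by
    have hev : M.eval p = p ^ Q.natDegree + ∑ i ∈ Finset.range Q.natDegree, c i * p ^ i := by
      rw [hM]; simp [eval_finset_sum]
    rw [hev]
    apply htrK
    · exact (PB K).add_mem ((PB K).pow_mem hpK _) ((PB K).sum_mem fun i _ =>
        (PB K).mul_mem (hPBK (hcB i)) ((PB K).pow_mem hpK _))
    · rw [eval_eq_sum_range, Finset.sum_range_succ, hQ.coeff_natDegree, one_mul] at hQx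
      rw [eval_add, eval_finset_sum, eval_pow, add_comm]
      simp only [eval_mul, eval_pow, hce]
      exact hQx
  have hMc : ∀ n, M.coeff n ∈ PB B := by
    intro n
    rw [hM, coeff_add, finset_sum_coeff, coeff_X_pow]
    refine (PB B).add_mem ?_ ((PB B).sum_mem fun i _ => ?_)
    · split_ifs
      · exact (PB B).one_mem
      · exact (PB B).zero_mem
    · rw [coeff_C_mul_X_pow]
      split_ifs
      · exact hcB i
      · exact (PB B).zero_mem
  letI : Algebra B[X] L[X] := Polynomial.algebra B L
  have hint : IsIntegral B[X] p := by
    have hl : M ∈ lifts (algebraMap B[X] L[X]) := by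
      rw [lifts_iff_coeff_lifts]
      intro n
      obtain ⟨q, hq⟩ := hMc n
      exact ⟨q, hq⟩
    obtain ⟨q, hq, -, hqm⟩ := lifts_and_natDegree_eq_and_monic hl hMm
    refine ⟨q, hqm, ?_⟩
    rw [← hq, eval_map] at hMe
    exact hMe
  refine mem_adj.2 ⟨p, mem_PB.2 fun n => ?_, rfl⟩
  obtain ⟨s, hs, hsp⟩ := mem_PB.1 hpK n
  obtain ⟨hsB, ⟨g', hg'⟩, hs0⟩ := hs
  exact hBic _ ⟨_, hph n⟩ ⟨_, hsp, s, hsB, ⟨_, 𝒜.mul_mem hg' (hph n)⟩, ⟨g', hg'⟩, hs0, mul_comm _ _⟩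
    (integralOver_iff.2 (hint.coeff n))

open Polynomial in
theorem transc_of_algIndep {A : Subring L} {I : Type*} (T : I → L) (hT : AlgIndepOver A T)
    (s : Set I) (i : I) (hi : i ∉ s) :
    ∀ p ∈ PB (Subring.closure (↑A ∪ T '' s)), p.eval (T i) = 0 → p = 0 := by
  have h : AlgebraicIndependent A T := hT
  have h2 := h.transcendental_adjoin hi
  rw [transcendental_iff] at h2
  intro p hp h0
  have hle : Subring.closure (↑A ∪ T '' s) ≤ (Algebra.adjoin A (T '' s)).toSubring := by
    rw [Subring.closure_le]
    rintro z (hz | hz)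
    · exact (Algebra.adjoin A (T '' s)).algebraMap_mem ⟨z, hz⟩
    · exact Algebra.subset_adjoin hz
  have : p ∈ lifts (algebraMap (Algebra.adjoin A (T '' s)) L) := by
    rw [lifts_iff_coeff_lifts]
    exact fun n => ⟨⟨_, hle (mem_PB.1 hp n)⟩, rfl⟩
  obtain ⟨q, rfl⟩ := this
  have := h2 q (by rw [aeval_def, ← eval_map]; exact h0)
  rw [this, map_zero]

theorem GradedStr.finite_case (𝒜 : GradedStr G L) (hL : 𝒜.IsGradedField)
    {A : Subring L} (hAgr : 𝒜.IsGradedSubring A) (hAic : GIntegrallyClosedIn 𝒜 A)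
    {I : Type*} (T : I → L) (hT : ∀ i, 𝒜.IsHomog (T i) ∧ T i ≠ 0)
    (hTind : AlgIndepOver A T) (s : Finset I) :
    𝒜.IsGradedSubring (Subring.closure (↑A ∪ T '' s)) ∧
    GIntegrallyClosedIn 𝒜 (Subring.closure (↑A ∪ T '' s)) := by
  classical
  induction s using Finset.induction_on with
  | empty => simpa using ⟨hAgr, hAic⟩
  | insert i s hi ih =>
    have he : Subring.closure (↑A ∪ T '' ↑(insert i s)) =
        Subring.closure (↑(Subring.closure (↑A ∪ T '' ↑s)) ∪ {T i}) := by
      rw [Finset.coe_insert, Set.image_insert_eq]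
      apply le_antisymm
      · rw [Subring.closure_le]
        rintro z (hz | rfl | hz)
        · exact Subring.subset_closure (Or.inl (Subring.subset_closure (Or.inl hz)))
        · exact Subring.subset_closure (Or.inr rfl)
        · exact Subring.subset_closure (Or.inl (Subring.subset_closure (Or.inr hz)))
      · rw [Subring.closure_le]
        rintro z (hz | rfl)
        · refine Subring.closure_mono ?_ hz
          exact Set.union_subset_union_right _ (Set.subset_insert _ _)
        · exact Subring.subset_closure (Or.inr (Or.inl rfl))
    obtain ⟨⟨g₀, hg₀⟩, -⟩ := hT i
    rw [he]
    exact ⟨𝒜.adj_graded ih.1 hg₀, 𝒜.step2 hL ih.1 ih.2 hg₀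
      (transc_of_algIndep T hTind s i (by simpa using hi))⟩

theorem exists_finset_closure {A : Subring L} {I : Type*} (T : I → L) {y : L}
    (hy : y ∈ Subring.closure (↑A ∪ Set.range T)) :
    ∃ s : Finset I, y ∈ Subring.closure (↑A ∪ T '' s) := by
  classical
  have mono : ∀ {s s' : Finset I}, s ⊆ s' →
      Subring.closure (↑A ∪ T '' s) ≤ Subring.closure (↑A ∪ T '' s') := fun h =>
    Subring.closure_mono (Set.union_subset_union_right _ (Set.image_mono (by exact_mod_cast h)))
  induction hy using Subring.closure_induction with
  | mem x hx =>
    rcases hx with hx | ⟨i, rfl⟩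
    · exact ⟨∅, Subring.subset_closure (Or.inl hx)⟩
    · exact ⟨{i}, Subring.subset_closure (Or.inr (by simp))⟩
  | zero => exact ⟨∅, Subring.zero_mem _⟩
  | one => exact ⟨∅, Subring.one_mem _⟩
  | add x y _ _ hx hy =>
    obtain ⟨s, hs⟩ := hx
    obtain ⟨s', hs'⟩ := hy
    exact ⟨s ∪ s', Subring.add_mem _ (mono Finset.subset_union_left hs)
      (mono Finset.subset_union_right hs')⟩
  | mul x y _ _ hx hy =>
    obtain ⟨s, hs⟩ := hx
    obtain ⟨s', hs'⟩ := hy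
    exact ⟨s ∪ s', Subring.mul_mem _ (mono Finset.subset_union_left hs)
      (mono Finset.subset_union_right hs')⟩
  | neg x _ hx =>
    obtain ⟨s, hs⟩ := hx
    exact ⟨s, Subring.neg_mem _ hs⟩

theorem GradedStr.infinite_case (𝒜 : GradedStr G L) (hL : 𝒜.IsGradedField)
    {A : Subring L} (hAgr : 𝒜.IsGradedSubring A) (hAic : GIntegrallyClosedIn 𝒜 A)
    {I : Type*} (T : I → L) (hT : ∀ i, 𝒜.IsHomog (T i) ∧ T i ≠ 0)
    (hTind : AlgIndepOver A T) :
    GIntegrallyClosedIn 𝒜 (Subring.closure (↑A ∪ Set.range T)) := by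
  classical
  rintro x hxh ⟨a, ha, b, hb, hah, hbh, hb0, hxb⟩ ⟨p, hp, hpR, hpx⟩
  obtain ⟨sa, hsa⟩ := exists_finset_closure T ha
  obtain ⟨sb, hsb⟩ := exists_finset_closure T hb
  choose sp hsp using fun n => exists_finset_closure T (hpR n)
  have mono : ∀ {s s' : Finset I}, s ⊆ s' →
      Subring.closure (↑A ∪ T '' s) ≤ Subring.closure (↑A ∪ T '' s') := fun h =>
    Subring.closure_mono (Set.union_subset_union_right _ (Set.image_mono (by exact_mod_cast h)))
  set S : Finset I := sa ∪ sb ∪ p.support.biUnion sp with hS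
  have h1 : sa ⊆ S := Finset.subset_union_left.trans Finset.subset_union_left
  have h2 : sb ⊆ S := Finset.subset_union_right.trans Finset.subset_union_left
  have h3 := (𝒜.finite_case hL hAgr hAic T hT hTind S).2 x hxh
    ⟨a, mono h1 hsa, b, mono h2 hsb, hah, hbh, hb0, hxb⟩ ⟨p, hp, fun n => ?_, hpx⟩
  · exact Subring.closure_mono
      (Set.union_subset_union_right _ (Set.image_subset_range _ _)) h3
  · by_cases hn : n ∈ p.support
    · refine mono ?_ (hsp n)
      exact (Finset.subset_biUnion_of_mem sp hn).trans Finset.subset_union_right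
    · rw [Polynomial.notMem_support_iff.1 hn]; exact Subring.zero_mem _

/-- Let `L/k` be an extension of `G`-graded fields, `A ⊆ L` an
integrally closed graded `k`-subalgebra, `T = {T_i}` a family of nonzero homogeneous
elements of `L` algebraically independent over `A`, and `F = Frac_G(k[T]) ⊆ L`.
Then the graded subring `F·A ⊆ L` generated by `F` and `A` is integrally closed. -/
theorem FA_integrally_closed
    (𝒜 : GradedStr G L) (hL : 𝒜.IsGradedField)
    (k : Subring L) (hk : 𝒜.IsGradedSubfield k)
    (A : Subring L) (hkA : k ≤ A) (hAgr : 𝒜.IsGradedSubring A)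
    (hAic : GIntegrallyClosedIn 𝒜 A)
    {I : Type v} (T : I → L) (hT : ∀ i, 𝒜.IsHomog (T i) ∧ T i ≠ 0)
    (hTind : AlgIndepOver A T) :
    GIntegrallyClosedIn 𝒜
      (Subring.closure
        ((𝒜.fracIn (Subring.closure (↑k ∪ Set.range T)) : Set L) ∪ ↑A)) := by
  set kT := Subring.closure (↑k ∪ Set.range T) with hkT
  set AT := Subring.closure (↑A ∪ Set.range T) with hAT
  set C := Subring.closure ((𝒜.fracIn kT : Set L) ∪ ↑A) with hC
  have hkTAT : kT ≤ AT := Subring.closure_mono (Set.union_subset_union_left _ hkA)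
  have hS : ∀ x ∈ 𝒜.homS hL kT, x ∈ AT := fun x hx => hkTAT hx.1
  have hkTF : kT ≤ 𝒜.fracIn kT := fun x hx => Subring.subset_closure (Or.inl hx)
  have hFC : 𝒜.fracIn kT ≤ C := fun x hx => Subring.subset_closure (Or.inl hx)
  have hATC : AT ≤ C := by
    rw [hAT, Subring.closure_le]
    rintro z (hz | hz)
    · exact Subring.subset_closure (Or.inr hz)
    · exact hFC (hkTF (Subring.subset_closure (Or.inr hz)))
  have hinv : ∀ s ∈ 𝒜.homS hL kT, Ring.inverse s ∈ C := fun s hs =>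
    hFC (Subring.subset_closure (Or.inr ⟨s, hs.1, hs.2.2, hs.2.1, rfl⟩))
  have hCle : C ≤ locS (𝒜.homS hL kT) AT hS := by
    rw [hC, Subring.closure_le]
    rintro z (hz | hz)
    · have : 𝒜.fracIn kT ≤ locS (𝒜.homS hL kT) AT hS := by
        rw [GradedStr.fracIn, Subring.closure_le]
        rintro w (hw | ⟨s, hs, hs0, hsh, rfl⟩)
        · exact le_locS _ _ _ (hkTAT hw)
        · refine ⟨s, ⟨hs, hsh, hs0⟩, ?_⟩
          rw [Ring.mul_inverse_cancel _ (hL.2 s hsh hs0)]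
          exact AT.one_mem
      exact this hz
    · exact le_locS _ _ _ (Subring.subset_closure (Or.inl hz))
  have hATic := 𝒜.infinite_case hL hAgr hAic T hT hTind
  rintro x ⟨g, hg⟩ ⟨a, ha, b, hb, ⟨ga, hga⟩, ⟨gb, hgb⟩, hb0, hxb⟩ ⟨p, hp, hpC, hpx⟩
  obtain ⟨s, hs, hsp⟩ := locS_common_poly _ _ hS p (mem_PB.2 fun n => hCle (hpC n))
  obtain ⟨sa, hsa, hsa'⟩ := hCle ha
  obtain ⟨sb, hsb, hsb'⟩ := hCle hb
  have hsu := hL.2 s hs.2.1 hs.2.2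
  have key : s * x ∈ AT := by
    have hss := (𝒜.homS hL kT).mul_mem hsa hsb
    obtain ⟨gss, hgss⟩ := hss.2.1
    obtain ⟨gs, hgs⟩ := hs.2.1
    refine hATic _ ⟨_, 𝒜.mul_mem hgs hg⟩ ⟨s * (sb * (sa * a)), ?_, sa * (sb * b), ?_, ?_, ?_, ?_, ?_⟩ ?_
    · exact AT.mul_mem (hS _ hs) (AT.mul_mem (hS _ hsb) hsa')
    · exact AT.mul_mem (hS _ hsa) hsb'
    · refine ⟨gs * (gss * ga), ?_⟩
      have := 𝒜.mul_mem hgs (𝒜.mul_mem hgss hga)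
      rwa [mul_comm sa sb, mul_assoc sb sa a] at this
    · refine ⟨gss * gb, ?_⟩
      have := 𝒜.mul_mem hgss hgb
      rwa [mul_assoc] at this
    · intro h0
      apply hb0
      apply (hL.2 _ hss.2.1 hss.2.2).mul_left_cancel
      rw [mul_zero, mul_assoc, h0]
    · rw [← hxb]; ring
    · refine ⟨p.scaleRoots s, (Polynomial.monic_scaleRoots_iff s).2 hp, fun n => ?_, ?_⟩
      · rw [Polynomial.coeff_scaleRoots]
        rcases lt_trichotomy n p.natDegree with hn | hn | hn
        · obtain ⟨j, hj⟩ := Nat.exists_eq_add_of_lt hn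
          have e : p.natDegree - n = j + 1 := by omega
          have := AT.mul_mem (AT.pow_mem (hS _ hs) j) (mem_PB.1 hsp n)
          rw [Polynomial.coeff_C_mul] at this
          convert this using 1
          rw [e]; ring
        · rw [hn, hp.coeff_natDegree, Nat.sub_self, pow_zero, one_mul]; exact AT.one_mem
        · rw [Polynomial.coeff_eq_zero_of_natDegree_lt hn, zero_mul]; exact AT.zero_mem
      · rw [Polynomial.scaleRoots_eval_mul, hpx, mul_zero]
  have hfin : x = Ring.inverse s * (s * x) := by
    rw [← mul_assoc, Ring.inverse_mul_cancel _ hsu, one_mul]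
  rw [hfin]
  exact C.mul_mem (hinv s hs) (hATC key)

end Statement12
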